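/- arXiv:2004.10514 — 2 statements merged into one kernel-verified Lean document; each statement's English description precedes it below -/
import Mathlib

section
/- Let F be a finite-dimensional real vector space of dimension m ≥ 1, and let ‖·‖₁ ≤ ‖·‖₂ ≤ … ≤ ‖·‖_p be finitely many seminorms on F such that ‖·‖_p is a norm. Then there exist linear operators B₁, …, B_m : F → F, each of rank at most 1, and a constant R > 0, such that e = Σ_{j=1}^m B_j e for every e ∈ F, and max_{1 ≤ j ≤ m} ‖B_j e‖_k ≤ R ‖e‖_k for every e ∈ F and every k = 1, …, p. -/
open Filter Topology

/-!
An operator `T` on a finite-dimensional space is bounded for a seminorm `q` as soon as it maps the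
null space of `q` into itself: it then induces a linear map on the Hausdorff quotient, where all
linear maps are bounded. The null spaces of increasing seminorms form a chain of subspaces, so some
basis of the space contains a basis of each of them. The coordinate projections of such a basis
preserve every null space, have rank one, and sum to the identity.
-/

section AdaptedBasis

variable {K V : Type*} [DivisionRing K] [AddCommGroup V] [Module K V]

lemma exists_linearIndepOn_span_inter_eq_of_isChain (C : Finset (Submodule K V))
    (hC : IsChain (· ≤ ·) (C : Set (Submodule K V))) :
    ∃ S : Set V, S ⊆ (sSup C : Submodule K V) ∧ LinearIndepOn K id S ∧
      ∀ W ∈ C, Submodule.span K (S ∩ W) = W := by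
  classical
  induction C using Finset.strongInduction with
  | H C ih =>
    obtain rfl | hne := C.eq_empty_or_nonempty
    · exact ⟨∅, by simp⟩
    obtain ⟨M, hM⟩ := C.exists_maximal hne
    have le_M : ∀ W ∈ C, W ≤ M := fun W hW ↦ (hC.total hW hM.prop).elim id (hM.le_of_ge hW)
    obtain ⟨S, hS_sub, hS, hS_span⟩ :=
      ih (C.erase M) (Finset.erase_ssubset hM.prop) (hC.mono (by simp))
    have hSM : S ⊆ M := hS_sub.trans <| SetLike.coe_subset_coe.2 <|
      sSup_le fun W hW ↦ le_M W (Finset.mem_of_mem_erase hW)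
    obtain ⟨T, hTM, hST, hMT, hT⟩ := exists_linearIndepOn_id_extension hS hSM
    refine ⟨T, hTM.trans (SetLike.coe_subset_coe.2 (le_sSup hM.prop)), hT, fun W hW ↦
      (Submodule.span_le.2 Set.inter_subset_right).antisymm ?_⟩
    obtain rfl | hWM := eq_or_ne W M
    · rwa [Set.inter_eq_left.2 hTM]
    · exact (hS_span W (Finset.mem_erase.2 ⟨hWM, hW⟩)).ge.trans
        (Submodule.span_mono (Set.inter_subset_inter_left _ hST))

lemma exists_basis_span_range_inter_eq_of_isChain [FiniteDimensional K V] {κ : Type*} [Fintype κ]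
    (hκ : Fintype.card κ = Module.finrank K V) (C : Finset (Submodule K V))
    (hC : IsChain (· ≤ ·) (C : Set (Submodule K V))) :
    ∃ b : Module.Basis κ K V, ∀ W ∈ C, Submodule.span K (Set.range b ∩ W) = W := by
  classical
  obtain ⟨S, -, hS, hS_span⟩ := exists_linearIndepOn_span_inter_eq_of_isChain (insert ⊤ C)
    (by simpa using hC.insert fun W _ _ ↦ .inr le_top)
  have span_S : Submodule.span K S = ⊤ := by simpa using hS_span ⊤
  let b : Module.Basis S K V := .mk hS (by simp [span_S])
  have : Fintype S := FiniteDimensional.fintypeBasisIndex b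
  have card_S : Fintype.card S = Fintype.card κ := by
    rw [hκ, Module.finrank_eq_card_basis b]
  refine ⟨b.reindex (Fintype.equivOfCardEq card_S), fun W hW ↦ ?_⟩
  simpa [b] using hS_span W (Finset.mem_insert_of_mem hW)

lemma le_comap_coord_smulRight_of_span_range_inter_eq {κ : Type*} (b : Module.Basis κ K V)
    {W : Submodule K V} (hW : Submodule.span K (Set.range b ∩ W) = W) (j : κ) :
    W ≤ W.comap ((b.coord j).smulRight (b j)) := by
  classical
  conv_lhs => rw [← hW]
  rw [Submodule.span_le]
  rintro _ ⟨⟨i, rfl⟩, hi⟩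
  obtain rfl | hij := eq_or_ne i j
  · simpa using hi
  · simp [Finsupp.single_eq_of_ne' hij]

lemma finrank_range_smulRight_le_one (f : V →ₗ[K] K) (v : V) :
    Module.finrank K (LinearMap.range (f.smulRight v)) ≤ 1 := by
  refine (Submodule.finrank_mono (t := Submodule.span K {v}) ?_).trans
    ((finrank_span_le_card {v}).trans (by simp))
  rintro _ ⟨x, rfl⟩
  exact Submodule.smul_mem _ _ (Submodule.mem_span_singleton_self v)

end AdaptedBasis

section NullSubmodule

variable {𝕜 E : Type*} [SeminormedRing 𝕜] [AddCommGroup E] [Module 𝕜 E]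

/-- The null space `{x | q x = 0}` of a seminorm `q`, the analogue for an unbundled seminorm of
`nullSubmodule`, which refers to the norm of a seminormed space. -/
def seminormNullSubmodule (q : Seminorm 𝕜 E) : Submodule 𝕜 E where
  carrier := {x | q x = 0}
  zero_mem' := map_zero q
  add_mem' {x y} (hx : q x = 0) (hy : q y = 0) :=
    ((map_add_le_add q x y).trans_eq (by rw [hx, hy, add_zero])).antisymm (apply_nonneg q _)
  smul_mem' c x (hx : q x = 0) := by
    change q (c • x) = 0
    rw [map_smul_eq_mul, hx, mul_zero]

lemma antitone_seminormNullSubmodule :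
    Antitone (seminormNullSubmodule : Seminorm 𝕜 E → Submodule 𝕜 E) :=
  fun _ q hpq x (hx : q x = 0) ↦ ((hpq x).trans_eq hx).antisymm (apply_nonneg _ x)

lemma isChain_seminormNullSubmodule_image_Icc {a b : ℕ} {q : ℕ → Seminorm 𝕜 E}
    (hq : ∀ k, a ≤ k → k < b → ∀ x, q k x ≤ q (k + 1) x) :
    IsChain (· ≤ ·) ((fun k ↦ seminormNullSubmodule (q k)) '' Finset.Icc a b) := by
  have hmono : MonotoneOn q (Finset.Icc a b) := by
    rw [Finset.coe_Icc]
    exact monotoneOn_of_le_add_one Set.ordConnected_Icc fun k _ hk hk' ↦ hq k hk.1 hk'.2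
  rintro _ ⟨k, hk, rfl⟩ _ ⟨l, hl, rfl⟩ -
  exact (le_total k l).symm.imp (fun h ↦ antitone_seminormNullSubmodule (hmono hl hk h))
    fun h ↦ antitone_seminormNullSubmodule (hmono hk hl h)

end NullSubmodule

section Boundedness

variable {𝕜 E G : Type*} [NontriviallyNormedField 𝕜] [CompleteSpace 𝕜]

lemma exists_norm_le_mul_norm_of_norm_eq_zero [SeminormedAddCommGroup E] [NormedSpace 𝕜 E]
    [FiniteDimensional 𝕜 E] [SeminormedAddCommGroup G] [NormedSpace 𝕜 G] (T : E →ₗ[𝕜] G)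
    (hT : ∀ x, ‖x‖ = 0 → ‖T x‖ = 0) : ∃ C : ℝ, ∀ x, ‖T x‖ ≤ C * ‖x‖ := by
  let mk := SeparationQuotient.mkCLM 𝕜 E
  let out := SeparationQuotient.outCLM 𝕜 E
  have : FiniteDimensional 𝕜 (SeparationQuotient E) :=
    .of_surjective mk.toLinearMap SeparationQuotient.surjective_mk
  let T' : SeparationQuotient E →L[𝕜] G := (T ∘ₗ out.toLinearMap).toContinuousLinearMap
  refine ⟨‖T'‖, fun x ↦ ?_⟩
  have norm_sub_eq_zero : ‖x - out (mk x)‖ = 0 := by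
    rw [← SeparationQuotient.norm_mk]
    simp [mk, out]
  calc ‖T x‖ ≤ ‖T (x - out (mk x))‖ + ‖T (out (mk x))‖ := by
        simpa using norm_add_le (T (x - out (mk x))) (T (out (mk x)))
    _ = ‖T' (mk x)‖ := by rw [hT _ norm_sub_eq_zero, zero_add]; rfl
    _ ≤ ‖T'‖ * ‖x‖ := T'.le_opNorm (mk x)

lemma eventually_seminorm_le_mul_of_le_comap [AddCommGroup E] [Module 𝕜 E]
    [FiniteDimensional 𝕜 E] [AddCommGroup G] [Module 𝕜 G] {q : Seminorm 𝕜 E} {r : Seminorm 𝕜 G}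
    {T : E →ₗ[𝕜] G} (hT : seminormNullSubmodule q ≤ (seminormNullSubmodule r).comap T) :
    ∀ᶠ R : ℝ in atTop, ∀ x, r (T x) ≤ R * q x := by
  let : SeminormedAddCommGroup E := q.toSeminormedAddCommGroup
  let : NormedSpace 𝕜 E := { norm_smul_le := fun c x ↦ (map_smul_eq_mul q c x).le }
  let : SeminormedAddCommGroup G := r.toSeminormedAddCommGroup
  let : NormedSpace 𝕜 G := { norm_smul_le := fun c x ↦ (map_smul_eq_mul r c x).le }
  obtain ⟨C, hC⟩ : ∃ C : ℝ, ∀ x, r (T x) ≤ C * q x := exists_norm_le_mul_norm_of_norm_eq_zero T hT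
  filter_upwards [eventually_ge_atTop C] with R hR x
  exact (hC x).trans (by gcongr)

end Boundedness

theorem exists_rank_one_decomposition_general {𝕜 F ι κ : Type*} [NontriviallyNormedField 𝕜]
    [CompleteSpace 𝕜] [AddCommGroup F] [Module 𝕜 F] [FiniteDimensional 𝕜 F]
    (t : Finset κ) (ht : t.card = Module.finrank 𝕜 F) (s : Finset ι) (q : ι → Seminorm 𝕜 F)
    (hq : IsChain (· ≤ ·) ((fun k ↦ seminormNullSubmodule (q k)) '' s)) :
    ∃ (B : κ → F →ₗ[𝕜] F) (R : ℝ), 0 < R ∧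
      (∀ j ∈ t, Module.finrank 𝕜 (LinearMap.range (B j)) ≤ 1) ∧
      (∀ e : F, e = ∑ j ∈ t, B j e) ∧
      (∀ e : F, ∀ k ∈ s, ∀ j ∈ t, q k (B j e) ≤ R * q k e) := by
  classical
  obtain ⟨b, hb⟩ := exists_basis_span_range_inter_eq_of_isChain
    (κ := t) (by simpa using ht) (s.image fun k ↦ seminormNullSubmodule (q k)) (by simpa using hq)
  let P (j : t) : F →ₗ[𝕜] F := (b.coord j).smulRight (b j)
  let B : κ → F →ₗ[𝕜] F := Function.extend Subtype.val P 0
  have hB (j : t) : B j = P j := Subtype.val_injective.extend_apply P 0 j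
  have bounded : ∀ᶠ R : ℝ in atTop, ∀ k ∈ s, ∀ j : t, ∀ e, q k (P j e) ≤ R * q k e := by
    refine (eventually_all_finset s).2 fun k hk ↦ eventually_all.2 fun j ↦ ?_
    exact eventually_seminorm_le_mul_of_le_comap
      (le_comap_coord_smulRight_of_span_range_inter_eq b (hb _ (Finset.mem_image_of_mem _ hk)) j)
  obtain ⟨R, hR, hPR⟩ := ((eventually_gt_atTop 0).and bounded).exists
  refine ⟨B, R, hR, fun j hj ↦ ?_, fun e ↦ ?_, fun e k hk j hj ↦ ?_⟩
  · exact hB ⟨j, hj⟩ ▸ finrank_range_smulRight_le_one _ _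
  · calc e = ∑ j : t, P j e := (b.sum_repr e).symm
      _ = ∑ j ∈ t, B j e := by simp_rw [← hB, Finset.sum_coe_sort t fun j ↦ B j e]
  · exact hB ⟨j, hj⟩ ▸ hPR k hk ⟨j, hj⟩ e

/-- Given a finite-dimensional real vector space `F` of dimension `m ≥ 1` and finitely many
increasing seminorms `‖·‖_1 ≤ … ≤ ‖·‖_p` on `F` with `‖·‖_p` a norm, there are rank-at-most-one
linear operators `B_1, …, B_m` on `F` summing to the identity and a constant `R > 0` with
`max_{1 ≤ j ≤ m} ‖B_j e‖_k ≤ R ‖e‖_k` for all `e ∈ F` and `k = 1, …, p`. -/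
theorem exists_rank_one_decomposition
    (F : Type*) [AddCommGroup F] [Module ℝ F] [FiniteDimensional ℝ F]
    (m : ℕ) (hm : 1 ≤ m) (hdim : Module.finrank ℝ F = m)
    (p : ℕ) (hp : 1 ≤ p) (q : ℕ → Seminorm ℝ F)
    (hmono : ∀ k, 1 ≤ k → k < p → ∀ e : F, q k e ≤ q (k + 1) e)
    (hnorm : ∀ e : F, e ≠ 0 → 0 < q p e) :
    ∃ (B : ℕ → F →ₗ[ℝ] F) (R : ℝ), 0 < R ∧
      (∀ j, 1 ≤ j → j ≤ m → Module.finrank ℝ (LinearMap.range (B j)) ≤ 1) ∧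
      (∀ e : F, e = ∑ j ∈ Finset.Icc 1 m, B j e) ∧
      (∀ e : F, ∀ k, 1 ≤ k → k ≤ p → ∀ j, 1 ≤ j → j ≤ m → q k (B j e) ≤ R * q k e) := by
  simpa only [Finset.mem_Icc, and_imp] using exists_rank_one_decomposition_general (Finset.Icc 1 m)
    (by simp [hdim]) (Finset.Icc 1 p) q (isChain_seminormNullSubmodule_image_Icc hmono)
end

section
/- Let (X, ‖·‖) be an infinite-dimensional Banach space over ℝ and let u : X → ℝ be a linear functional that is not continuous. Define the norm |||x||| := |u(x)| + ‖x‖ on X. Then there exists a sequence (x_n) in X that is Cauchy for |||·||| and satisfies ‖x_n‖ → 0 but |||x_n||| does not converge to 0; equivalently, the unique continuous linear extension of the identity map (X, |||·|||) → (X, ‖·‖) to the completion of (X, |||·|||) is not injective. -/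
open Filter Topology

/-!
The kernel of a discontinuous linear form `u` is dense, hence so are all its fibers. A sequence in
the fiber over `1` converging to `0` is Cauchy for `‖u x‖ + ‖x‖`, because `u` vanishes on
differences of its terms, while the values of this norm along the sequence tend to `1`.
-/

section TopologicalVectorSpace

variable {𝕜 E : Type*} [NontriviallyNormedField 𝕜] [AddCommGroup E] [Module 𝕜 E]
  [TopologicalSpace E] [IsTopologicalAddGroup E] [ContinuousSMul 𝕜 E] {u : E →ₗ[𝕜] 𝕜}

theorem dense_ker_of_not_continuous (hu : ¬ Continuous u) : Dense (u.ker : Set E) :=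
  u.isClosed_or_dense_ker.resolve_left fun hclosed => hu (u.continuous_of_isClosed_ker hclosed)

theorem dense_fiber_of_not_continuous (hu : ¬ Continuous u) (c : 𝕜) : Dense (u ⁻¹' {c}) := by
  have hu_ne : u ≠ 0 := by
    rintro rfl
    exact hu continuous_zero
  obtain ⟨z, hz⟩ := LinearMap.surjective hu_ne c
  have hfiber : u ⁻¹' {c} = Homeomorph.subRight z ⁻¹' (u.ker : Set E) := by
    ext x
    simp [hz, sub_eq_zero]
  rw [hfiber]
  exact (dense_ker_of_not_continuous hu).preimage (Homeomorph.subRight z).isOpenMap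

theorem exists_seq_apply_eq_tendsto_of_not_continuous [FrechetUrysohnSpace E]
    (hu : ¬ Continuous u) (c : 𝕜) (y : E) :
    ∃ x : ℕ → E, (∀ n, u (x n) = c) ∧ Tendsto x atTop (𝓝 y) :=
  mem_closure_iff_seq_limit.mp (dense_fiber_of_not_continuous hu c y)

end TopologicalVectorSpace

theorem exists_tripleNorm_cauchy_not_null_general {𝕜 E : Type*} [NontriviallyNormedField 𝕜]
    [SeminormedAddCommGroup E] [NormedSpace 𝕜 E] (u : E →ₗ[𝕜] 𝕜) (hu : ¬ Continuous u) :
    ∃ x : ℕ → E,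
      (∀ ε : ℝ, 0 < ε → ∃ N : ℕ, ∀ m ≥ N, ∀ n ≥ N,
        ‖u (x m - x n)‖ + ‖x m - x n‖ < ε) ∧
      Tendsto (fun n => ‖x n‖) atTop (𝓝 0) ∧
      ¬ Tendsto (fun n => ‖u (x n)‖ + ‖x n‖) atTop (𝓝 0) := by
  obtain ⟨x, hux, hx⟩ := exists_seq_apply_eq_tendsto_of_not_continuous hu 1 0
  have hnorm : Tendsto (fun n => ‖x n‖) atTop (𝓝 0) := tendsto_zero_iff_norm_tendsto_zero.mp hx
  refine ⟨x, fun ε hε => ?_, hnorm, fun hnull => ?_⟩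
  · have hdiff (m n : ℕ) : u (x m - x n) = 0 := by rw [map_sub, hux, hux, sub_self]
    simpa only [hdiff, norm_zero, zero_add, dist_eq_norm] using
      Metric.cauchySeq_iff.mp hx.cauchySeq ε hε
  · have hone : Tendsto (fun n => ‖u (x n)‖ + ‖x n‖) atTop (𝓝 1) := by
      simpa only [hux, norm_one, add_zero] using hnorm.const_add 1
    exact one_ne_zero (tendsto_nhds_unique hone hnull)

/-- Let `X` be an infinite-dimensional Banach space and `u : X → ℝ` a discontinuous linear
functional; set `|||x||| := |u x| + ‖x‖`. Then there is a sequence `(x n)` in `X` which is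
Cauchy for `|||·|||`, with `‖x n‖ → 0`, but `|||x n|||` not converging to `0` (equivalently,
the continuous extension of the identity `(X, |||·|||) → (X, ‖·‖)` to the completion of
`(X, |||·|||)` is not injective). -/
theorem exists_tripleNorm_cauchy_not_null
    (X : Type*) [NormedAddCommGroup X] [NormedSpace ℝ X] [CompleteSpace X]
    (hX : ¬ FiniteDimensional ℝ X)
    (u : X →ₗ[ℝ] ℝ) (hu : ¬ Continuous u) :
    ∃ x : ℕ → X,
      (∀ ε : ℝ, 0 < ε → ∃ N : ℕ, ∀ m ≥ N, ∀ n ≥ N,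
        |u (x m - x n)| + ‖x m - x n‖ < ε) ∧
      Tendsto (fun n => ‖x n‖) atTop (𝓝 0) ∧
      ¬ Tendsto (fun n => |u (x n)| + ‖x n‖) atTop (𝓝 0) :=
  exists_tripleNorm_cauchy_not_null_general u hu
end
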